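/- arXiv:1403.8142 — 5 statements merged into one kernel-verified Lean document; each statement's English description precedes it below -/
import Mathlib

section
/- Let F be a field, V an F-vector space, and g : V →ₗ[F] V a finite-potent endomorphism, i.e. there exists n ≥ 1 such that the range of g^n is finite-dimensional over F. Then there exists a finite-dimensional g-stable subspace W ⊆ V such that the endomorphism of V/W induced by g is nilpotent. -/
/-- An endomorphism `g` is finite-potent if some power `g ^ n` (with `n ≥ 1`) has
finite-dimensional range. -/
def FinitePotent (F : Type*) [Field F] {V : Type*} [AddCommGroup V] [Module F V]
    (g : V →ₗ[F] V) : Prop :=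
  ∃ n : ℕ, 1 ≤ n ∧ FiniteDimensional F (LinearMap.range (g ^ n))

/-- Tate: every finite-potent endomorphism admits a finite-dimensional stable subspace
with nilpotent induced endomorphism on the quotient. -/
theorem finitePotent_exists_trace_witness
    (F : Type*) [Field F] (V : Type*) [AddCommGroup V] [Module F V]
    (g : V →ₗ[F] V) (hg : FinitePotent F g) :
    ∃ W : Submodule F V, FiniteDimensional F W ∧
      ∃ h : W ≤ W.comap g, IsNilpotent (Submodule.mapQ W W g h) := by
  obtain ⟨n, -, hfin⟩ := hg
  -- The range of `g ^ n` is `g`-stable because `g` commutes with `g ^ n`,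
  -- and `g ^ n` vanishes modulo its own range.
  have hstable : LinearMap.range (g ^ n) ≤ (LinearMap.range (g ^ n)).comap g := by
    rintro _ ⟨v, rfl⟩
    refine ⟨g v, ?_⟩
    rw [← Module.End.mul_apply, ← Module.End.mul_apply, ← pow_succ, ← pow_succ']
  refine ⟨LinearMap.range (g ^ n), hfin, hstable, n, ?_⟩
  rw [← Submodule.mapQ_pow]
  ext v
  exact (Submodule.Quotient.mk_eq_zero _).2 ⟨v, rfl⟩
end

section
/- Let F be a field, V an F-vector space, and g : V →ₗ[F] V a finite-potent endomorphism. If W₁ and W₂ are two finite-dimensional g-stable subspaces of V such that for each i the endomorphism of V/Wᵢ induced by g is nilpotent, then the trace of the restriction of g to W₁ equals the trace of the restriction of g to W₂. (Hence the Tate trace tr_V(g), defined as the trace of g restricted to any such subspace, is well-defined.) -/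
/-- Additivity of the trace along `0 → U → W → W / U → 0` when `f` acts
nilpotently on the quotient. The subspace is given by an injection `i : U → W`; a complement to it
stands in for the quotient. -/
theorem trace_eq_of_injective_of_pow_mem_range {F U W : Type*} [Field F]
    [AddCommGroup U] [Module F U] [AddCommGroup W] [Module F W]
    [FiniteDimensional F U] [FiniteDimensional F W]
    (i : U →ₗ[F] W) (hi : Function.Injective i) (h : Module.End F U) (f : Module.End F W)
    (hif : f ∘ₗ i = i ∘ₗ h) (k : ℕ) (hk : ∀ w, (f ^ k) w ∈ LinearMap.range i) :
    LinearMap.trace F W f = LinearMap.trace F U h := by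
  obtain ⟨p, hp⟩ := i.exists_leftInverse_of_injective (LinearMap.ker_eq_bot.mpr hi)
  have hp' : ∀ u, p (i u) = u := fun u => LinearMap.congr_fun hp u
  have hif' : ∀ u, f (i u) = i (h u) := fun u => LinearMap.congr_fun hif u
  -- `q` projects onto a complement of `i U`, so `q * f` models the action of `f` on `W / i U`.
  let q : Module.End F W := 1 - i ∘ₗ p
  have hqf : q * f * q = q * f := by
    ext w
    simp [q, hif', hp']
  have hpow : ∀ n : ℕ, (q * f) ^ n * q = q * f ^ n := by
    intro n
    induction n with
    | zero => simp
    | succ n ih => rw [pow_succ', mul_assoc, ih, ← mul_assoc, hqf, pow_succ', mul_assoc]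
  have hnil : IsNilpotent (q * f) := by
    refine ⟨k + 1, ?_⟩
    rw [pow_succ, ← mul_assoc, hpow]
    ext w
    obtain ⟨u, hu⟩ := hk (f w)
    simp [q, ← hu, hp']
  have h0 : LinearMap.trace F W (f * q) = 0 := by
    rw [LinearMap.trace_mul_comm]
    exact (LinearMap.isNilpotent_trace_of_isNilpotent hnil).eq_zero
  have hU : LinearMap.trace F W (i ∘ₗ (h ∘ₗ p)) = LinearMap.trace F U h := by
    rw [LinearMap.trace_comp_comm', LinearMap.comp_assoc, hp, LinearMap.comp_id]
  have hdecomp : f = f * q + i ∘ₗ (h ∘ₗ p) := by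
    ext w
    simp [q, hif']
  rw [hdecomp, map_add, h0, hU, zero_add]

theorem exists_pow_mem_of_isNilpotent_mapQ {F V : Type*} [Field F] [AddCommGroup V] [Module F V]
    {g : V →ₗ[F] V} {W : Submodule F V} {h : W ≤ W.comap g}
    (hn : IsNilpotent (Submodule.mapQ W W g h)) : ∃ k : ℕ, ∀ v, (g ^ k) v ∈ W := by
  obtain ⟨k, hk⟩ := hn
  refine ⟨k, fun v => ?_⟩
  rw [← Submodule.mapQ_pow] at hk
  have := LinearMap.congr_fun hk (Submodule.Quotient.mk v)
  simpa using this

/-- Passing to a smaller stable subspace that absorbs a power of `g` preserves the trace. -/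
theorem trace_restrict_eq_of_le {F V : Type*} [Field F] [AddCommGroup V] [Module F V]
    {g : V →ₗ[F] V} {U W : Submodule F V} [FiniteDimensional F U] [FiniteDimensional F W]
    (hUW : U ≤ W) (hU : ∀ x ∈ U, g x ∈ U) (hW : ∀ x ∈ W, g x ∈ W)
    (k : ℕ) (hk : ∀ w ∈ W, (g ^ k) w ∈ U) :
    LinearMap.trace F W (g.restrict hW) = LinearMap.trace F U (g.restrict hU) := by
  refine trace_eq_of_injective_of_pow_mem_range (Submodule.inclusion hUW)
    (Submodule.inclusion_injective hUW) _ _ rfl k fun w => ?_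
  refine ⟨⟨(g ^ k) w, hk w w.2⟩, Subtype.ext ?_⟩
  rw [Module.End.pow_restrict k hW]
  rfl

/-- Tate: the trace of a finite-potent endomorphism restricted to a finite-dimensional
stable subspace with nilpotent induced action on the quotient does not depend on the
choice of such a subspace; hence the Tate trace is well-defined. -/
theorem tateTrace_well_defined
    (F : Type*) [Field F] (V : Type*) [AddCommGroup V] [Module F V]
    (g : V →ₗ[F] V) (hg : FinitePotent F g)
    (W₁ W₂ : Submodule F V) [FiniteDimensional F W₁] [FiniteDimensional F W₂]
    (h₁ : W₁ ≤ W₁.comap g) (h₂ : W₂ ≤ W₂.comap g)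
    (hn₁ : IsNilpotent (Submodule.mapQ W₁ W₁ g h₁))
    (hn₂ : IsNilpotent (Submodule.mapQ W₂ W₂ g h₂)) :
    LinearMap.trace F W₁ (g.restrict fun x hx => h₁ hx) =
      LinearMap.trace F W₂ (g.restrict fun x hx => h₂ hx) := by
  obtain ⟨k₁, hk₁⟩ := exists_pow_mem_of_isNilpotent_mapQ hn₁
  obtain ⟨k₂, hk₂⟩ := exists_pow_mem_of_isNilpotent_mapQ hn₂
  have hU : ∀ x ∈ W₁ ⊓ W₂, g x ∈ W₁ ⊓ W₂ := fun x hx => ⟨h₁ hx.1, h₂ hx.2⟩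
  have hk : ∀ v, (g ^ (k₁ + k₂)) v ∈ W₁ ⊓ W₂ := by
    refine fun v => ⟨?_, ?_⟩
    · rw [pow_add]
      exact hk₁ _
    · rw [add_comm, pow_add]
      exact hk₂ _
  rw [trace_restrict_eq_of_le inf_le_left hU (fun x hx => h₁ hx) _ fun w _ => hk w,
    trace_restrict_eq_of_le inf_le_right hU (fun x hx => h₂ hx) _ fun w _ => hk w]
end

section
/- Let F be a field, V and V' F-vector spaces, and f : V →ₗ[F] V', g : V' →ₗ[F] V linear maps such that the composition f∘g is a finite-potent endomorphism of V'. Then g∘f is a finite-potent endomorphism of V, and their Tate traces agree: for every finite-dimensional (f∘g)-stable subspace W' ⊆ V' with nilpotent induced endomorphism of V'/W' and every finite-dimensional (g∘f)-stable subspace W ⊆ V with nilpotent induced endomorphism of V/W, one has trace((f∘g)|_{W'}) = trace((g∘f)|_{W}). -/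
section

variable {F : Type*} [Field F] {V : Type*} [AddCommGroup V] [Module F V]
  {V' : Type*} [AddCommGroup V'] [Module F V']

theorem trace_restrict_eq_of_mapsTo_le (h : V →ₗ[F] V) (U W : Submodule F V)
    [FiniteDimensional F U] [FiniteDimensional F W] (hUW : U ≤ W) (hm : ∀ x ∈ W, h x ∈ U)
    (hU : ∀ x ∈ U, h x ∈ U) (hW : ∀ x ∈ W, h x ∈ W) :
    LinearMap.trace F W (h.restrict hW) = LinearMap.trace F U (h.restrict hU) :=
  LinearMap.trace_comp_comm' (h.restrict hm) (Submodule.inclusion hUW)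

theorem map_mem_range_pow_succ (h : V →ₗ[F] V) (k : ℕ) {x : V}
    (hx : x ∈ LinearMap.range (h ^ k)) : h x ∈ LinearMap.range (h ^ (k + 1)) := by
  obtain ⟨y, rfl⟩ := hx
  exact ⟨y, by rw [pow_succ', Module.End.mul_apply]⟩

theorem map_mem_range_pow (h : V →ₗ[F] V) (k : ℕ) {x : V}
    (hx : x ∈ LinearMap.range (h ^ k)) : h x ∈ LinearMap.range (h ^ k) := by
  obtain ⟨y, rfl⟩ := hx
  exact ⟨h y, by rw [← Module.End.mul_apply, ← Module.End.mul_apply, ← pow_succ, ← pow_succ']⟩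

theorem trace_restrict_inf_range_pow (h : V →ₗ[F] V) (W : Submodule F V)
    [FiniteDimensional F W] (hW : ∀ x ∈ W, h x ∈ W) (k : ℕ) :
    LinearMap.trace F W (h.restrict hW) =
      LinearMap.trace F (W ⊓ LinearMap.range (h ^ k) : Submodule F V)
        (h.restrict fun x hx => ⟨hW x hx.1, map_mem_range_pow h k hx.2⟩) := by
  induction k with
  | zero =>
    exact trace_restrict_eq_of_mapsTo_le h _ _ inf_le_left
      (fun x hx => ⟨hW x hx, by simp⟩) _ _
  | succ k ih =>
    rw [ih]
    refine trace_restrict_eq_of_mapsTo_le h _ _ (inf_le_inf_left _ ?_)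
      (fun x hx => ⟨hW x hx.1, map_mem_range_pow_succ h k hx.2⟩) _ _
    rw [pow_succ]
    exact LinearMap.range_comp_le_range _ _

/-- The trace on a finite-dimensional stable subspace `W` can be computed on the range of any
power of `h` that lands in `W`. -/
theorem trace_restrict_eq_range_pow (h : V →ₗ[F] V) (W : Submodule F V)
    [FiniteDimensional F W] (hW : ∀ x ∈ W, h x ∈ W) (n : ℕ) (hn : LinearMap.range (h ^ n) ≤ W) :
    LinearMap.trace F W (h.restrict hW) =
      LinearMap.trace F (LinearMap.range (h ^ n))
        (h.restrict fun _ hx => map_mem_range_pow h n hx) := by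
  have := Submodule.finiteDimensional_of_le hn
  rw [trace_restrict_inf_range_pow h W hW n]
  exact trace_restrict_eq_of_mapsTo_le h _ _ (le_inf hn le_rfl)
    (fun x hx => map_mem_range_pow h n hx.2) _ _

theorem exists_range_pow_le (h : V →ₗ[F] V) (W : Submodule F V) (hW : W ≤ W.comap h)
    (hnil : IsNilpotent (Submodule.mapQ W W h hW)) :
    ∃ n, ∀ m, n ≤ m → LinearMap.range (h ^ m) ≤ W := by
  obtain ⟨n, hn⟩ := hnil
  refine ⟨n, fun m hm => ?_⟩
  have hm0 := pow_eq_zero_of_le hm hn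
  rw [← Submodule.mapQ_pow] at hm0
  rintro _ ⟨x, rfl⟩
  have := LinearMap.congr_fun hm0 (W.mkQ x)
  simpa using this

theorem comp_pow_apply (f : V →ₗ[F] V') (g : V' →ₗ[F] V) (n : ℕ) (x : V) :
    f (((g ∘ₗ f) ^ n) x) = ((f ∘ₗ g) ^ n) (f x) := by
  induction n with
  | zero => simp
  | succ n ih => simp [pow_succ', ih]

theorem map_mem_range_comp_pow (f : V →ₗ[F] V') (g : V' →ₗ[F] V) (n : ℕ) {x : V}
    (hx : x ∈ LinearMap.range ((g ∘ₗ f) ^ n)) : f x ∈ LinearMap.range ((f ∘ₗ g) ^ n) := by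
  obtain ⟨y, rfl⟩ := hx
  exact ⟨f y, (comp_pow_apply f g n y).symm⟩

theorem FinitePotent.comp_swap {f : V →ₗ[F] V'} {g : V' →ₗ[F] V}
    (hfg : FinitePotent F (f ∘ₗ g)) : FinitePotent F (g ∘ₗ f) := by
  obtain ⟨n, -, hfin⟩ := hfg
  refine ⟨n + 1, by omega, Submodule.finiteDimensional_of_le
    (S₂ := (LinearMap.range ((f ∘ₗ g) ^ n)).map g) ?_⟩
  -- The power `(g ∘ f) ^ (n + 1)` factors as `g ∘ (f ∘ g) ^ n ∘ f`.
  rintro _ ⟨x, rfl⟩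
  refine ⟨_, ⟨f x, rfl⟩, ?_⟩
  rw [← comp_pow_apply, pow_succ']
  rfl

end

/-- Axiom T5 of Tate's trace: if `f ∘ g` is finite-potent then so is `g ∘ f`, and their
Tate traces (computed on any trace witnesses) agree. -/
theorem tateTrace_comm
    (F : Type*) [Field F]
    (V : Type*) [AddCommGroup V] [Module F V]
    (V' : Type*) [AddCommGroup V'] [Module F V']
    (f : V →ₗ[F] V') (g : V' →ₗ[F] V)
    (hfg : FinitePotent F (f ∘ₗ g)) :
    FinitePotent F (g ∘ₗ f) ∧
    ∀ (W' : Submodule F V'), FiniteDimensional F W' →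
      ∀ (hW' : W' ≤ W'.comap (f ∘ₗ g)),
        IsNilpotent (Submodule.mapQ W' W' (f ∘ₗ g) hW') →
    ∀ (W : Submodule F V), FiniteDimensional F W →
      ∀ (hW : W ≤ W.comap (g ∘ₗ f)),
        IsNilpotent (Submodule.mapQ W W (g ∘ₗ f) hW) →
    LinearMap.trace F W' ((f ∘ₗ g).restrict (p := W') (q := W') fun x hx => hW' hx) =
      LinearMap.trace F W ((g ∘ₗ f).restrict (p := W) (q := W) fun x hx => hW hx) := by
  refine ⟨hfg.comp_swap, fun W' _ hW' hnil' W _ hW hnil => ?_⟩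
  obtain ⟨n', hn'⟩ := exists_range_pow_le _ W' hW' hnil'
  obtain ⟨n, hn⟩ := exists_range_pow_le _ W hW hnil
  have hle' := hn' (max n n') (le_max_right _ _)
  have hle := hn (max n n') (le_max_left _ _)
  have := Submodule.finiteDimensional_of_le hle'
  have := Submodule.finiteDimensional_of_le hle
  rw [trace_restrict_eq_range_pow _ W' _ _ hle', trace_restrict_eq_range_pow _ W _ _ hle]
  exact LinearMap.trace_comp_comm'
    (g.restrict fun _ hx => map_mem_range_comp_pow g f (max n n') hx)
    (f.restrict fun _ hx => map_mem_range_comp_pow f g (max n n') hx)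
end

section
/- Let F be a field, V an F-vector space, f : V →ₗ[F] V a linear map, and L, L' ⊆ V subspaces with L ⊆ ker f and range f ⊆ L'. Then f(L') ⊆ L' and f(L ∩ L') = 0, so f induces an endomorphism f̄ of L'/(L ∩ L'). If f̄ is finite-potent, then f is finite-potent. In particular, if L'/(L ∩ L') is finite-dimensional, then f∘f has finite-dimensional range. -/
section Induced

variable (F : Type*) [Field F] {V : Type*} [AddCommGroup V] [Module F V]

/-- The copy of `L ∩ L'` inside `L'`. -/
def lattK (L L' : Submodule F V) : Submodule F L' :=
  (L ⊓ L').comap L'.subtype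

/-- The restriction of `f` to an endomorphism of `L'`, when `range f ⊆ L'`. -/
def resEnd (f : V →ₗ[F] V) (L' : Submodule F V) (hR : LinearMap.range f ≤ L') :
    L' →ₗ[F] L' :=
  f.restrict (p := L') (q := L') fun x _ => hR (LinearMap.mem_range_self f x)

/-- The endomorphism `f̄` of `L'/(L ∩ L')` induced by `f`, when `L ⊆ ker f` and
`range f ⊆ L'`. -/
def inducedLattQuot (f : V →ₗ[F] V) (L L' : Submodule F V)
    (hK : L ≤ LinearMap.ker f) (hR : LinearMap.range f ≤ L') :
    (L' ⧸ lattK F L L') →ₗ[F] (L' ⧸ lattK F L L') :=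
  Submodule.mapQ (lattK F L L') (lattK F L L') (resEnd F f L' hR)
    (by
      intro x hx
      have hx' : (x : V) ∈ L ⊓ L' := hx
      have h0 : f (x : V) = 0 := LinearMap.mem_ker.mp (hK hx'.1)
      refine Submodule.mem_comap.mpr ?_
      have hcoe : ((resEnd F f L' hR x : L') : V) = f (x : V) := rfl
      show ((resEnd F f L' hR x : L') : V) ∈ L ⊓ L'
      rw [hcoe, h0]
      exact (L ⊓ L').zero_mem)

end Induced

/-- The range of `f ^ (n + 2)` is finite-dimensional as soon as that of `f̄ ^ n` is, because
`f ^ (n + 2)` factors through `f̄ ^ n`; `n = 0` is allowed. -/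
theorem finiteDimensional_range_pow_add_two {F : Type*} [Field F] {V : Type*} [AddCommGroup V]
    [Module F V] (f : V →ₗ[F] V) (L L' : Submodule F V)
    (hK : L ≤ LinearMap.ker f) (hR : LinearMap.range f ≤ L') (n : ℕ)
    (hn : FiniteDimensional F (LinearMap.range (inducedLattQuot F f L L' hK hR ^ n))) :
    FiniteDimensional F (LinearMap.range (f ^ (n + 2))) := by
  let p : V →ₗ[F] (L' ⧸ lattK F L L') :=
    (lattK F L L').mkQ ∘ₗ f.codRestrict L' fun x => hR (LinearMap.mem_range_self f x)
  let h : (L' ⧸ lattK F L L') →ₗ[F] V :=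
    (lattK F L L').liftQ (f ∘ₗ L'.subtype) fun x hx => hK hx.1
  have hcomm : ∀ (k : ℕ) (x : V), (inducedLattQuot F f L L' hK hR ^ k) (p x) = p ((f ^ k) x) := by
    intro k
    induction k with
    | zero => intro x; rfl
    | succ k ih =>
      intro x
      rw [pow_succ, pow_succ, Module.End.mul_apply, Module.End.mul_apply, ← ih]
      rfl
  have hle : LinearMap.range (f ^ (n + 2)) ≤
      (LinearMap.range (inducedLattQuot F f L L' hK hR ^ n)).map h := by
    rintro _ ⟨x, rfl⟩
    refine ⟨_, ⟨p x, rfl⟩, ?_⟩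
    rw [hcomm, add_comm, pow_add, pow_two]
    rfl
  exact Submodule.finiteDimensional_of_le hle

/-- An operator killing the lattice `L` and mapping everything into the lattice `L'`
induces an endomorphism `f̄` of `L'/(L ∩ L')`; if `f̄` is finite-potent then so is `f`,
and if `L'/(L ∩ L')` is finite-dimensional then `f ∘ f` has finite-dimensional range. -/
theorem finitePotent_of_lattice_quotient
    (F : Type*) [Field F] (V : Type*) [AddCommGroup V] [Module F V]
    (f : V →ₗ[F] V) (L L' : Submodule F V)
    (hK : L ≤ LinearMap.ker f) (hR : LinearMap.range f ≤ L') :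
    (∀ x ∈ L', f x ∈ L') ∧
    (∀ x ∈ L ⊓ L', f x = 0) ∧
    (FinitePotent F (inducedLattQuot F f L L' hK hR) → FinitePotent F f) ∧
    (FiniteDimensional F (L' ⧸ lattK F L L') →
      FiniteDimensional F (LinearMap.range (f ∘ₗ f))) := by
  refine ⟨fun x _ => hR (LinearMap.mem_range_self f x), fun x hx => hK hx.1, ?_, ?_⟩
  · rintro ⟨n, _, hfin⟩
    exact ⟨n + 2, by omega, finiteDimensional_range_pow_add_two f L L' hK hR n hfin⟩
  · intro hfin
    have h2 := finiteDimensional_range_pow_add_two f L L' hK hR 0 inferInstance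
    rwa [zero_add, pow_two] at h2
end

section
/- Let F be a field, V an F-vector space, f : V →ₗ[F] V linear, and L, L' ⊆ V subspaces with L ⊆ ker f and range f ⊆ L', and let f̄ be the induced endomorphism of L'/(L ∩ L'). Assume f̄ is finite-potent (so f is finite-potent as well). Then the Tate traces of f and f̄ agree: for every finite-dimensional f-stable subspace W ⊆ V with nilpotent induced endomorphism of V/W, and every finite-dimensional f̄-stable subspace W̄ ⊆ L'/(L ∩ L') with nilpotent induced endomorphism of (L'/(L ∩ L'))/W̄, one has trace(f|_W) = trace(f̄|_{W̄}). -/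
/-!
The Tate trace satisfies `tr (B ∘ A) = tr (A ∘ B)`. For `A : X → Y`, `B : Y → X`, a witness `W`
of `B ∘ A` and a witness `W'` of `A ∘ B`, the spaces `W + B W'` and `W' + A W` are exchanged by `A`
and `B`, so there the identity is the usual one in finite dimension; enlarging a witness does not
change the trace because the quotient is nilpotent (`trace_restrict_eq_of_le`). This is
`trace_restrict_comp_comm`.

The theorem applies this identity twice. The operator `f` on `V` and its restriction to `L'` are the
two composites of `f : V → L'` with the inclusion `L' → V`. Since `f` kills `L ∩ L'`, the
restriction of `f` to `L'` and `f̄` are the two composites of the projection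
`L' → L' / (L ∩ L')` with the map `L' / (L ∩ L') → L'` induced by `f`.
-/



section TraceWitness

variable {F X Y : Type*} [Field F] [AddCommGroup X] [Module F X] [AddCommGroup Y] [Module F Y]

/-- The subspace `W` absorbs a power of `g`; for `g`-stable `W` this says that `g` is nilpotent
on `X ⧸ W`. -/
def AbsorbsPow (g : X →ₗ[F] X) (W : Submodule F X) : Prop :=
  ∃ n : ℕ, ∀ x, (g ^ n) x ∈ W

theorem absorbsPow_of_isNilpotent_mapQ {g : X →ₗ[F] X} {W : Submodule F X} (hW : W ≤ W.comap g)
    (h : IsNilpotent (Submodule.mapQ W W g hW)) : AbsorbsPow g W := by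
  obtain ⟨n, hn⟩ := h
  refine ⟨n, fun x => ?_⟩
  rw [← Submodule.mapQ_pow] at hn
  have := LinearMap.congr_fun hn (Submodule.Quotient.mk x)
  simpa [Submodule.mapQ_apply] using this

theorem comp_pow_succ_apply (A : X →ₗ[F] Y) (B : Y →ₗ[F] X) (n : ℕ) (y : Y) :
    ((A ∘ₗ B) ^ (n + 1)) y = A (((B ∘ₗ A) ^ n) (B y)) := by
  induction n with
  | zero => simp
  | succ n ih => rw [pow_succ', Module.End.mul_apply, ih, pow_succ' (B ∘ₗ A)]; rfl

theorem AbsorbsPow.map {A : X →ₗ[F] Y} {B : Y →ₗ[F] X} {W : Submodule F X}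
    (h : AbsorbsPow (B ∘ₗ A) W) : AbsorbsPow (A ∘ₗ B) (W.map A) := by
  obtain ⟨n, hn⟩ := h
  refine ⟨n + 1, fun y => ?_⟩
  rw [comp_pow_succ_apply]
  exact Submodule.mem_map_of_mem (hn _)

theorem trace_restrict_comp_comm_of_mapsTo (A : X →ₗ[F] Y) (B : Y →ₗ[F] X)
    (W : Submodule F X) (W' : Submodule F Y) [FiniteDimensional F W] [FiniteDimensional F W']
    (hA : ∀ x ∈ W, A x ∈ W') (hB : ∀ y ∈ W', B y ∈ W) :
    LinearMap.trace F W ((B ∘ₗ A).restrict (p := W) (q := W) fun x hx => hB _ (hA x hx)) =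
      LinearMap.trace F W' ((A ∘ₗ B).restrict (p := W') (q := W') fun y hy => hA _ (hB y hy)) :=
  LinearMap.trace_comp_comm' (A.restrict hA) (B.restrict hB)

/-- Enlarging a finite-dimensional stable subspace by a part on which `g` is nilpotent
modulo that subspace does not change the trace. -/
theorem trace_restrict_eq_of_le_s16 (g : X →ₗ[F] X) (n : ℕ) (W W₁ : Submodule F X)
    [FiniteDimensional F W] [FiniteDimensional F W₁] (hle : W ≤ W₁)
    (hW : ∀ x ∈ W, g x ∈ W) (hW₁ : ∀ x ∈ W₁, g x ∈ W₁) (hn : ∀ x ∈ W₁, (g ^ n) x ∈ W) :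
    LinearMap.trace F W (g.restrict hW) = LinearMap.trace F W₁ (g.restrict hW₁) := by
  induction n generalizing W₁ with
  | zero =>
    obtain rfl : W = W₁ := le_antisymm hle fun x hx => by simpa using hn x hx
    rfl
  | succ n ih =>
    -- `g` maps `W₁` into the intermediate space `W + g W₁`, which `g ^ n` maps into `W`.
    have hsup : W ⊔ W₁.map g ≤ W₁ :=
      sup_le hle (Submodule.map_le_iff_le_comap.mpr hW₁)
    have hg : ∀ x ∈ W₁, g x ∈ W ⊔ W₁.map g := fun x hx =>
      Submodule.mem_sup_right (Submodule.mem_map_of_mem hx)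
    have hpow : ∀ k : ℕ, ∀ x ∈ W, (g ^ k) x ∈ W := fun k =>
      W.le_comap_pow_of_le_comap hW k
    have key : W ⊔ W₁.map g ≤ W.comap (g ^ n) := by
      refine sup_le (hpow n) ?_
      rintro _ ⟨x, hx, rfl⟩
      have := hn x hx
      rwa [pow_succ, Module.End.mul_apply] at this
    rw [ih (W ⊔ W₁.map g) le_sup_left (fun x hx => hg x (hsup hx)) fun x hx => key hx]
    exact (trace_restrict_comp_comm_of_mapsTo g LinearMap.id W₁ (W ⊔ W₁.map g) hg
      fun x hx => hsup hx).symm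

/-- `tr (B ∘ A) = tr (A ∘ B)` for Tate traces, computed on arbitrary witnesses. -/
theorem trace_restrict_comp_comm (A : X →ₗ[F] Y) (B : Y →ₗ[F] X)
    (W : Submodule F X) (W' : Submodule F Y) [FiniteDimensional F W] [FiniteDimensional F W']
    (hW : ∀ x ∈ W, (B ∘ₗ A) x ∈ W) (hW' : ∀ y ∈ W', (A ∘ₗ B) y ∈ W')
    (h : AbsorbsPow (B ∘ₗ A) W) (h' : AbsorbsPow (A ∘ₗ B) W') :
    LinearMap.trace F W ((B ∘ₗ A).restrict hW) =
      LinearMap.trace F W' ((A ∘ₗ B).restrict hW') := by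
  obtain ⟨n, hn⟩ := h
  obtain ⟨m, hm⟩ := h'
  have hA : ∀ x ∈ W ⊔ W'.map B, A x ∈ W' ⊔ W.map A := by
    have : W ⊔ W'.map B ≤ (W' ⊔ W.map A).comap A := by
      refine sup_le (fun x hx => Submodule.mem_sup_right (Submodule.mem_map_of_mem hx)) ?_
      rintro _ ⟨y, hy, rfl⟩
      exact Submodule.mem_sup_left (hW' y hy)
    exact this
  have hB : ∀ y ∈ W' ⊔ W.map A, B y ∈ W ⊔ W'.map B := by
    have : W' ⊔ W.map A ≤ (W ⊔ W'.map B).comap B := by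
      refine sup_le (fun x hx => Submodule.mem_sup_right (Submodule.mem_map_of_mem hx)) ?_
      rintro _ ⟨x, hx, rfl⟩
      exact Submodule.mem_sup_left (hW x hx)
    exact this
  rw [trace_restrict_eq_of_le_s16 (B ∘ₗ A) n W (W ⊔ W'.map B) le_sup_left hW
      (fun x hx => hB _ (hA x hx)) fun x _ => hn x,
    trace_restrict_eq_of_le_s16 (A ∘ₗ B) m W' (W' ⊔ W.map A) le_sup_left hW'
      (fun y hy => hA _ (hB y hy)) fun y _ => hm y]
  exact trace_restrict_comp_comm_of_mapsTo A B _ _ hA hB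

end TraceWitness


/-- The Tate trace of an operator `f` killing a lattice `L` and mapping everything into a
lattice `L'` equals the Tate trace of the induced endomorphism `f̄` of `L'/(L ∩ L')`:
the traces on any pair of trace witnesses agree. -/
theorem tateTrace_eq_trace_on_lattice_quotient
    (F : Type*) [Field F] (V : Type*) [AddCommGroup V] [Module F V]
    (f : V →ₗ[F] V) (L L' : Submodule F V)
    (hK : L ≤ LinearMap.ker f) (hR : LinearMap.range f ≤ L')
    (hfp : FinitePotent F (inducedLattQuot F f L L' hK hR)) :
    ∀ (W : Submodule F V), FiniteDimensional F W →
      ∀ (hW : W ≤ W.comap f), IsNilpotent (Submodule.mapQ W W f hW) →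
    ∀ (Wb : Submodule F (L' ⧸ lattK F L L')), FiniteDimensional F Wb →
      ∀ (hWb : Wb ≤ Wb.comap (inducedLattQuot F f L L' hK hR)),
        IsNilpotent (Submodule.mapQ Wb Wb (inducedLattQuot F f L L' hK hR) hWb) →
    LinearMap.trace F W (f.restrict (p := W) (q := W) fun x hx => hW hx) =
      LinearMap.trace F Wb ((inducedLattQuot F f L L' hK hR).restrict
        (p := Wb) (q := Wb) fun x hx => hWb hx) := by
  intro W hWfin hW hWnil Wb hWbfin hWb hWbnil
  let φ : V →ₗ[F] L' := f.codRestrict L' fun x => hR (LinearMap.mem_range_self f x)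
  -- The map `L' / (L ∩ L') → L'` induced by `f`.
  let ψ : (L' ⧸ lattK F L L') →ₗ[F] L' := (lattK F L L').liftQ (φ ∘ₗ L'.subtype) (by
    intro x hx
    have hx' : (x : V) ∈ L ⊓ L' := hx
    exact Subtype.ext (LinearMap.mem_ker.mp (hK hx'.1)))
  let π : L' →ₗ[F] (L' ⧸ lattK F L L') := (lattK F L L').mkQ
  have hf : L'.subtype ∘ₗ φ = f := rfl
  have hmid : ψ ∘ₗ π = φ ∘ₗ L'.subtype := Submodule.liftQ_mkQ _ _ _
  have hfb : π ∘ₗ ψ = inducedLattQuot F f L L' hK hR :=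
    Submodule.linearMap_qext _ (LinearMap.ext fun _ => rfl)
  have hWabs : AbsorbsPow (L'.subtype ∘ₗ φ) W := absorbsPow_of_isNilpotent_mapQ hW hWnil
  have hWbabs : AbsorbsPow (π ∘ₗ ψ) Wb := hfb ▸ absorbsPow_of_isNilpotent_mapQ hWb hWbnil
  have hWst : ∀ x ∈ W, (L'.subtype ∘ₗ φ) x ∈ W := hW
  have hMst : ∀ y ∈ W.map φ, (φ ∘ₗ L'.subtype) y ∈ W.map φ := by
    rintro _ ⟨x, hx, rfl⟩
    exact Submodule.mem_map_of_mem (hW hx)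
  have hWbst : ∀ q ∈ Wb, (π ∘ₗ ψ) q ∈ Wb := hfb ▸ hWb
  have hMabs := hWabs.map
  have e₁ := trace_restrict_comp_comm φ L'.subtype W (W.map φ) hWst hMst hWabs hMabs
  have e₂ := trace_restrict_comp_comm π ψ (W.map φ) Wb (by rwa [hmid]) hWbst
    (by rwa [hmid]) hWbabs
  simp only [hmid] at e₂
  simp only [hfb] at e₂
  exact e₁.trans e₂
end
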